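/- Every complete semilattice is dominated: if D is a dcpo in which every subset that is bounded above has a supremum, then for every closed irreducible subset A of D, the collection ∇A is Scott-closed in D̂. In particular every complete lattice is dominated. -/

import Mathlib

namespace HoZhao

variable {α : Type*}

/-- A set is Scott-closed if it is a lower set and contains the supremum of each of its
nonempty directed subsets. -/
def ScottClosed [Preorder α] (S : Set α) : Prop :=
  IsLowerSet S ∧ ∀ d : Set α, d ⊆ S → d.Nonempty → DirectedOn (· ≤ ·) d →
    ∀ a : α, IsLUB d a → a ∈ S

/-- A nonempty set is irreducible if whenever it is covered by two Scott-closed sets it is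
contained in one of them. -/
def ScottIrred [Preorder α] (A : Set α) : Prop :=
  A.Nonempty ∧ ∀ B C : Set α, ScottClosed B → ScottClosed C → A ⊆ B ∪ C → A ⊆ B ∨ A ⊆ C

/-- A dcpo: every nonempty directed subset has a supremum. -/
def IsDcpo (α : Type*) [Preorder α] : Prop :=
  ∀ d : Set α, d.Nonempty → DirectedOn (· ≤ ·) d → ∃ a : α, IsLUB d a

/-- The order sobrification: the poset of Scott-closed irreducible subsets, ordered by
inclusion. -/
abbrev OrderSob (α : Type*) [Preorder α] :=
  {A : Set α // ScottClosed A ∧ ScottIrred A}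

/-- x' ≺ x : for every closed irreducible set A with x ≤ sup A, one has x' ∈ A. -/
def Prec [Preorder α] (x' x : α) : Prop :=
  ∀ A : Set α, ScottClosed A → ScottIrred A → ∀ a : α, IsLUB A a → x ≤ a → x' ∈ A

/-- A' ◁ A : A' is contained in ↓x for some x ∈ A. -/
def Tri [Preorder α] (A' A : OrderSob α) : Prop :=
  ∃ x ∈ (A : Set α), (A' : Set α) ⊆ {y : α | y ≤ x}

/-- ∇A = the collection of all A' ◁ A. -/
def Nabla [Preorder α] (A : OrderSob α) : Set (OrderSob α) := {A' | Tri A' A}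

/-- A dcpo is dominated if ∇A is Scott-closed in the order sobrification, for every A. -/
def Dominated (α : Type*) [Preorder α] : Prop :=
  ∀ A : OrderSob α, ScottClosed (Nabla A)

/-! If `s` is a supremum of `P`, then `P ∈ ∇A` just says `s ∈ A`. An upper bound `x` of a closed
irreducible set is the same as a principal ideal `↓x` containing it, so a supremum in the order
sobrification of a family `P i` has the same upper bounds as `⋃ i, P i`; its supremum is therefore
that of the elements `sup (P i)`. Thus taking suprema turns directed suprema in `∇A` into directed
suprema in `A`, which is Scott-closed. -/

section Preorder

variable [Preorder α]

theorem scottClosed_Iic (x : α) : ScottClosed (Set.Iic x) :=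
  ⟨isLowerSet_Iic x, fun _ hd _ _ _ ha => ha.2 hd⟩

theorem scottIrred_Iic (x : α) : ScottIrred (Set.Iic x) :=
  ⟨⟨x, le_rfl⟩, fun _ _ hB hC hcover =>
    (hcover (Set.self_mem_Iic : x ∈ Set.Iic x)).imp
      (fun hx => hB.1.Iic_subset hx) (fun hx => hC.1.Iic_subset hx)⟩

/-- The principal ideal `↓x` as a point of the order sobrification; `x ↦ ↓x` is the canonical map of
a poset into its order sobrification. -/
def OrderSob.principal (x : α) : OrderSob α :=
  ⟨Set.Iic x, scottClosed_Iic x, scottIrred_Iic x⟩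

theorem OrderSob.le_principal_iff {P : OrderSob α} {x : α} :
    P ≤ OrderSob.principal x ↔ x ∈ upperBounds (P : Set α) :=
  Iff.rfl

theorem OrderSob.upperBounds_coe_of_isLUB {d : Set (OrderSob α)} {M : OrderSob α}
    (hM : IsLUB d M) : upperBounds (M : Set α) = upperBounds (⋃ P : d, (P : Set α)) := by
  ext x
  calc x ∈ upperBounds (M : Set α)
      ↔ OrderSob.principal x ∈ upperBounds d := by
        rw [← OrderSob.le_principal_iff, isLUB_le_iff hM]
    _ ↔ ∀ P : d, x ∈ upperBounds (P : Set α) := by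
        simp only [mem_upperBounds, OrderSob.le_principal_iff, Subtype.forall]
    _ ↔ x ∈ upperBounds (⋃ P : d, (P : Set α)) := by
        rw [upperBounds_iUnion, Set.mem_iInter]

theorem OrderSob.isLUB_coe_of_isLUB_range {d : Set (OrderSob α)} {M : OrderSob α} {σ : d → α}
    {s : α} (hM : IsLUB d M) (hσ : ∀ P : d, IsLUB (P : Set α) (σ P))
    (hs : IsLUB (Set.range σ) s) : IsLUB (M : Set α) s :=
  (isLUB_congr (OrderSob.upperBounds_coe_of_isLUB hM)).2
    ((isLUB_iUnion_iff_of_isLUB hσ s).1 hs)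

theorem isLowerSet_nabla (A : OrderSob α) : IsLowerSet (Nabla A) :=
  fun _ _ hQP ⟨x, hxA, hPx⟩ => ⟨x, hxA, Set.Subset.trans hQP hPx⟩

theorem bddAbove_of_mem_nabla {A P : OrderSob α} (hP : P ∈ Nabla A) : BddAbove (P : Set α) :=
  let ⟨x, _, hPx⟩ := hP
  ⟨x, hPx⟩

theorem mem_nabla_iff_of_isLUB {A P : OrderSob α} {s : α} (hs : IsLUB (P : Set α) s) :
    P ∈ Nabla A ↔ s ∈ (A : Set α) :=
  ⟨fun ⟨_, hxA, hPx⟩ => A.2.1.1 (hs.2 hPx) hxA, fun hsA => ⟨s, hsA, hs.1⟩⟩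

theorem complete_semilattice_dominated_general (hD : IsDcpo α)
    (hlub : ∀ P : OrderSob α, BddAbove (P : Set α) → ∃ s : α, IsLUB (P : Set α) s) :
    Dominated α := by
  intro A
  refine ⟨isLowerSet_nabla A, fun d hdA hne hdir M hM => ?_⟩
  choose σ hσ using fun P : d => hlub P (bddAbove_of_mem_nabla (hdA P.2))
  have hσ_mono : Monotone σ := fun P Q hPQ => (hσ P).mono (hσ Q) hPQ
  have hσ_mem : Set.range σ ⊆ (A : Set α) :=
    Set.range_subset_iff.2 fun P => (mem_nabla_iff_of_isLUB (hσ P)).1 (hdA P.2)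
  have hσ_dir : DirectedOn (· ≤ ·) (Set.range σ) :=
    directedOn_range.2 (hdir.directed_val.mono_comp _ hσ_mono)
  have hσ_ne : (Set.range σ).Nonempty :=
    have := hne.to_subtype
    Set.range_nonempty σ
  obtain ⟨s, hs⟩ := hD _ hσ_ne hσ_dir
  exact (mem_nabla_iff_of_isLUB (OrderSob.isLUB_coe_of_isLUB_range hM hσ hs)).2
    (A.2.1.2 _ hσ_mem hσ_ne hσ_dir s hs)

end Preorder

/-- every complete semilattice (dcpo where every set bounded above has a
supremum) is dominated; in particular every complete lattice is dominated. -/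
theorem complete_semilattice_dominated {β : Type*} [PartialOrder α] [CompleteLattice β]
    (hD : IsDcpo α) (hbdd : ∀ S : Set α, BddAbove S → ∃ a : α, IsLUB S a) :
    Dominated α ∧ Dominated β :=
  ⟨complete_semilattice_dominated_general hD fun P => hbdd P,
    complete_semilattice_dominated_general (fun d _ _ => ⟨sSup d, isLUB_sSup d⟩)
      fun P _ => ⟨sSup P, isLUB_sSup _⟩⟩

end HoZhao
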